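/- arXiv:2401.09366 — 2 statements merged into one kernel-verified Lean document; each statement's English description precedes it below -/
import Mathlib

section
/- Let C and D be categories, let F : C ⥤ C be an endofunctor, and let (A, a : F(A) ⟶ A) be an initial F-algebra (an initial object in the category of F-algebras). Suppose C has an initial object and colimits of ℕ-indexed chains, F preserves colimits of ℕ-indexed chains, and L : C ⥤ D preserves initial objects and colimits of ℕ-indexed chains. Let X be an object of D and let Ψ be a natural transformation between the contravariant functors C^op ⥤ Type sending an object c to the hom-set D(L(c), X) and to D(L(F(c)), X) respectively. Then there exists a unique morphism h : L(A) ⟶ X in D such that L(a) ≫ h = Ψ_A(h). -/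
open CategoryTheory CategoryTheory.Limits

universe v₁ v₂ u₁ u₂

/-!
Let `P` be a presheaf that is a point at the initial object `⊥`, with `Ψ : P ⟶ F.op ⋙ P`. Iterating
`Ψ` from that point gives a compatible family of elements of `P` along the initial chain
`⊥ ⟶ F ⊥ ⟶ F (F ⊥) ⟶ ⋯`. The initial algebra `A` is the colimit of this chain (Adámek) and its
structure map is invertible (Lambek). If `P` sends this colimit to a limit, then the solutions of
`P(str) h = Ψ h` are exactly the elements of `P A` that restrict to the family of iterates, and
there is exactly one of these. Generalised Mendler iteration is the case `P = D(L -, X)`.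
-/

section InitialChain

variable {C : Type u₁} [Category.{v₁} C] (F : C ⥤ C) [HasInitial C]

/-- The objects `Fⁿ ⊥` of the initial chain of `F`. The recursion makes `Fⁿ⁺¹ ⊥` definitionally
`F (Fⁿ ⊥)`, which `Nat.iterate` would not. -/
noncomputable def initialChainObj : ℕ → C
  | 0 => ⊥_ C
  | n + 1 => F.obj (initialChainObj n)

/-- The connecting morphisms `Fⁿ ! : Fⁿ ⊥ ⟶ Fⁿ⁺¹ ⊥` of the initial chain of `F`. -/
noncomputable def initialChainMap : ∀ n, initialChainObj F n ⟶ initialChainObj F (n + 1)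
  | 0 => initial.to _
  | n + 1 => F.map (initialChainMap n)

/-- The initial chain `⊥ ⟶ F ⊥ ⟶ F (F ⊥) ⟶ ⋯` of an endofunctor. -/
noncomputable def initialChain : ℕ ⥤ C :=
  Functor.ofSequence (initialChainMap F)

theorem initialChain_map_succ (n : ℕ) :
    (initialChain F).map (homOfLE n.le_succ) = initialChainMap F n :=
  Functor.ofSequence_map_homOfLE_succ _ n

end InitialChain

section AlgebraCocone

variable {C : Type u₁} [Category.{v₁} C] {F : C ⥤ C} [HasInitial C]

/-- The legs `Fⁿ ⊥ ⟶ A` of the canonical cocone from the initial chain to an algebra `A`. -/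
noncomputable def algebraCoconeLeg (A : Endofunctor.Algebra F) : ∀ n, initialChainObj F n ⟶ A.a
  | 0 => initial.to _
  | n + 1 => F.map (algebraCoconeLeg A n) ≫ A.str

theorem initialChainMap_comp_algebraCoconeLeg (A : Endofunctor.Algebra F) (n : ℕ) :
    initialChainMap F n ≫ algebraCoconeLeg A (n + 1) = algebraCoconeLeg A n := by
  induction n with
  | zero => exact initialIsInitial.hom_ext _ _
  | succ n ih =>
    change F.map (initialChainMap F n) ≫ F.map (algebraCoconeLeg A (n + 1)) ≫ A.str =
      F.map (algebraCoconeLeg A n) ≫ A.str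
    rw [← F.map_comp_assoc, ih]

/-- The canonical cocone from the initial chain to an algebra. -/
noncomputable def algebraCocone (A : Endofunctor.Algebra F) : Cocone (initialChain F) where
  pt := A.a
  ι := NatTrans.ofSequence (algebraCoconeLeg A) fun n => by
    rw [initialChain_map_succ]
    exact (initialChainMap_comp_algebraCoconeLeg A n).trans (Category.comp_id _).symm

theorem algebraCoconeLeg_comp_hom {A B : Endofunctor.Algebra F} (f : A ⟶ B) (n : ℕ) :
    algebraCoconeLeg A n ≫ f.f = algebraCoconeLeg B n := by
  induction n with
  | zero => exact initialIsInitial.hom_ext _ _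
  | succ n ih =>
    change (F.map (algebraCoconeLeg A n) ≫ A.str) ≫ f.f = F.map (algebraCoconeLeg B n) ≫ B.str
    rw [Category.assoc, ← f.h, ← F.map_comp_assoc, ih]

/-- The canonical cocone as a functor of the algebra. -/
noncomputable def algebraCoconeFunctor : Endofunctor.Algebra F ⥤ Cocone (initialChain F) where
  obj := algebraCocone
  map f := { hom := f.f, w := algebraCoconeLeg_comp_hom f }

end AlgebraCocone

section Adamek

variable {C : Type u₁} [Category.{v₁} C] {F : C ⥤ C} [HasInitial C]

theorem algebraHom_comm_of_comp_eq_algebraCoconeLeg [PreservesColimit (initialChain F) F]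
    {A B : Endofunctor.Algebra F} (hA : IsColimit (algebraCocone A)) {d : A.a ⟶ B.a}
    (hd : ∀ n, algebraCoconeLeg A n ≫ d = algebraCoconeLeg B n) :
    F.map d ≫ B.str = A.str ≫ d := by
  refine (isColimitOfPreserves F hA).hom_ext fun n => ?_
  change F.map (algebraCoconeLeg A n) ≫ F.map d ≫ B.str =
    F.map (algebraCoconeLeg A n) ≫ A.str ≫ d
  rw [← F.map_comp_assoc, hd, ← Category.assoc]
  exact (hd (n + 1)).symm

/-- Adámek's theorem: an algebra that is the colimit of the initial chain, preserved by `F`, is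
initial. -/
noncomputable def isInitialOfIsColimitAlgebraCocone [PreservesColimit (initialChain F) F]
    {A : Endofunctor.Algebra F} (hA : IsColimit (algebraCocone A)) : IsInitial A :=
  IsInitial.ofUniqueHom
    (fun B =>
      { f := hA.desc (algebraCocone B)
        h := algebraHom_comm_of_comp_eq_algebraCoconeLeg hA (hA.fac (algebraCocone B)) })
    fun B f => Endofunctor.Algebra.Hom.ext <|
      hA.uniq (algebraCocone B) f.f (algebraCoconeLeg_comp_hom f)

variable [HasColimit (initialChain F)] [PreservesColimit (initialChain F) F]

variable (F) in
theorem exists_str_colimit_initialChain :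
    ∃ k : F.obj (colimit (initialChain F)) ⟶ colimit (initialChain F),
      ∀ n, F.map (colimit.ι (initialChain F) n) ≫ k = colimit.ι (initialChain F) (n + 1) := by
  let hF := isColimitOfPreserves F (colimit.isColimit (initialChain F))
  let shifted : Cocone (initialChain F ⋙ F) :=
    { pt := colimit (initialChain F)
      ι := NatTrans.ofSequence (fun n => colimit.ι (initialChain F) (n + 1)) fun n => by
        have shift_map : F.map ((initialChain F).map (homOfLE n.le_succ)) =
            (initialChain F).map (homOfLE (n + 1).le_succ) := by
          rw [initialChain_map_succ, initialChain_map_succ]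
          rfl
        rw [Functor.comp_map, shift_map]
        exact (colimit.w (initialChain F) _).trans (Category.comp_id _).symm }
  exact ⟨hF.desc shifted, hF.fac shifted⟩

variable (F) in
theorem exists_algebra_isColimit_algebraCocone :
    ∃ A : Endofunctor.Algebra F, Nonempty (IsColimit (algebraCocone A)) := by
  obtain ⟨k, hk⟩ := exists_str_colimit_initialChain F
  let A : Endofunctor.Algebra F := ⟨colimit (initialChain F), k⟩
  have leg_eq : ∀ n, algebraCoconeLeg A n = colimit.ι (initialChain F) n := by
    intro n
    induction n with
    | zero => exact initialIsInitial.hom_ext _ _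
    | succ n ih =>
      change F.map (algebraCoconeLeg A n) ≫ k = colimit.ι (initialChain F) (n + 1)
      rw [ih]
      exact hk n
  exact ⟨A, ⟨(colimit.isColimit (initialChain F)).ofIsoColimit
    (Cocone.ext (Iso.refl _) fun n => (Category.comp_id _).trans (leg_eq n).symm)⟩⟩

theorem nonempty_isColimit_algebraCocone {A : Endofunctor.Algebra F} (hA : IsInitial A) :
    Nonempty (IsColimit (algebraCocone A)) := by
  obtain ⟨B, ⟨hB⟩⟩ := exists_algebra_isColimit_algebraCocone F
  let e : B ≅ A := (isInitialOfIsColimitAlgebraCocone hB).uniqueUpToIso hA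
  exact ⟨hB.ofIsoColimit (algebraCoconeFunctor.mapIso e)⟩

end Adamek

section MendlerIteration

open Opposite

universe w

theorem mem_sections_of_map_succ {G : ℕᵒᵖ ⥤ Type w} (x : ∀ n : ℕ, G.obj (op n))
    (hx : ∀ n : ℕ, G.map (homOfLE n.le_succ).op (x (n + 1)) = x n) :
    (fun n : ℕᵒᵖ => x n.unop) ∈ G.sections := by
  let τ : (Functor.const ℕᵒᵖ).obj PUnit ⟶ G :=
    NatTrans.ofOpSequence (fun n => ↾fun _ => x n) fun n => by
      ext
      exact (hx n).symm
  intro i j f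
  exact (NatTrans.naturality_apply τ f PUnit.unit).symm

variable {C : Type u₁} [Category.{v₁} C] {F : C ⥤ C} [HasInitial C] {P : Cᵒᵖ ⥤ Type w}

theorem map_algebraCoconeLeg_succ_eq_app {Ψ : P ⟶ F.op ⋙ P} {A : Endofunctor.Algebra F}
    {x y : P.obj (op A.a)} (hxy : P.map A.str.op x = Ψ.app (op A.a) y) (n : ℕ) :
    P.map (algebraCoconeLeg A (n + 1)).op x =
      Ψ.app (op (initialChainObj F n)) (P.map (algebraCoconeLeg A n).op y) := by
  have map_leg_succ : P.map (algebraCoconeLeg A (n + 1)).op x =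
      P.map (F.map (algebraCoconeLeg A n)).op (P.map A.str.op x) :=
    P.map_comp_apply A.str.op (F.map (algebraCoconeLeg A n)).op x
  rw [map_leg_succ, hxy]
  exact (NatTrans.naturality_apply Ψ (algebraCoconeLeg A n).op y).symm

variable [Unique (P.obj (op (⊥_ C)))] (Ψ : P ⟶ F.op ⋙ P)

/-- The `n`-th Mendler iterate of `Ψ`: the element of `P (Fⁿ ⊥)` obtained by applying `Ψ` `n` times
to the unique element of `P ⊥`. -/
noncomputable def mendlerIterate : ∀ n, P.obj (op (initialChainObj F n))
  | 0 => (default : P.obj (op (⊥_ C)))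
  | n + 1 => Ψ.app (op (initialChainObj F n)) (mendlerIterate n)

theorem map_initialChainMap_mendlerIterate (n : ℕ) :
    P.map (initialChainMap F n).op (mendlerIterate Ψ (n + 1)) = mendlerIterate Ψ n := by
  induction n with
  | zero => exact Subsingleton.elim (α := P.obj (op (⊥_ C))) _ _
  | succ n ih =>
    exact (NatTrans.naturality_apply Ψ (initialChainMap F n).op _).symm.trans
      (congrArg (Ψ.app (op (initialChainObj F n))) ih)

theorem mendlerIterate_mem_sections :
    (fun n : ℕᵒᵖ => mendlerIterate Ψ n.unop) ∈ ((initialChain F).op ⋙ P).sections :=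
  mem_sections_of_map_succ (G := (initialChain F).op ⋙ P) (mendlerIterate Ψ) fun n => by
    change P.map ((initialChain F).map (homOfLE n.le_succ)).op (mendlerIterate Ψ (n + 1)) = _
    rw [initialChain_map_succ]
    exact map_initialChainMap_mendlerIterate Ψ n

variable {Ψ} {A : Endofunctor.Algebra F} {h : P.obj (op A.a)}

theorem map_algebraCoconeLeg_eq_mendlerIterate (hh : P.map A.str.op h = Ψ.app (op A.a) h) (n : ℕ) :
    P.map (algebraCoconeLeg A n).op h = mendlerIterate Ψ n := by
  induction n with
  | zero => exact Subsingleton.elim (α := P.obj (op (⊥_ C))) _ _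
  | succ n ih =>
    exact (map_algebraCoconeLeg_succ_eq_app hh n).trans
      (congrArg (Ψ.app (op (initialChainObj F n))) ih)

theorem map_str_eq_app_of_map_algebraCoconeLeg_eq [IsIso A.str]
    (hA : IsLimit (P.mapCone (algebraCocone A).op))
    (hh : ∀ n, P.map (algebraCoconeLeg A n).op h = mendlerIterate Ψ n) :
    P.map A.str.op h = Ψ.app (op A.a) h := by
  -- `k` is the solution of `P(str) k = Ψ h`; it restricts to the same family as `h`.
  let k : P.obj (op A.a) := P.map (inv A.str).op (Ψ.app (op A.a) h)
  have map_str_k : P.map A.str.op k = Ψ.app (op A.a) h := by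
    rw [← P.map_comp_apply, ← op_comp, IsIso.hom_inv_id, op_id, P.map_id_apply]
  have leg_k : ∀ n, P.map (algebraCoconeLeg A n).op k = mendlerIterate Ψ n
    | 0 => Subsingleton.elim (α := P.obj (op (⊥_ C))) _ _
    | n + 1 =>
      (map_algebraCoconeLeg_succ_eq_app map_str_k n).trans
        (congrArg (Ψ.app (op (initialChainObj F n))) (hh n))
  have h_eq : h = k :=
    Concrete.isLimit_ext _ hA h k fun n => (hh n.unop).trans (leg_k n.unop).symm
  exact (congrArg (P.map A.str.op) h_eq).trans map_str_k

theorem existsUnique_map_str_eq_app [IsIso A.str]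
    (hA : IsLimit (P.mapCone (algebraCocone A).op)) (Ψ : P ⟶ F.op ⋙ P) :
    ∃! h : P.obj (op A.a), P.map A.str.op h = Ψ.app (op A.a) h := by
  obtain ⟨h, hh, h_unique⟩ :=
    (Types.isLimit_iff _).1 ⟨hA⟩ _ (mendlerIterate_mem_sections Ψ)
  exact ⟨h, map_str_eq_app_of_map_algebraCoconeLeg_eq hA fun n => hh (op n),
    fun h' hh' => h_unique h' fun n => map_algebraCoconeLeg_eq_mendlerIterate hh' n.unop⟩

theorem generalised_mendler_iteration_cocontinuous_general
    {alg : Endofunctor.Algebra F} (halg : IsInitial alg) [HasColimit (initialChain F)]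
    [PreservesColimit (initialChain F) F] [PreservesLimit (initialChain F).op P]
    (Ψ : P ⟶ F.op ⋙ P) :
    ∃! h : P.obj (op alg.a), P.map alg.str.op h = Ψ.app (op alg.a) h := by
  obtain ⟨isColimit_alg⟩ := nonempty_isColimit_algebraCocone halg
  have : IsIso alg.str := Endofunctor.Algebra.Initial.str_isIso halg
  exact existsUnique_map_str_eq_app (isLimitOfPreserves P isColimit_alg.op) Ψ

end MendlerIteration

theorem preservesLimit_op_comp_yoneda_obj {J : Type*} [Category* J] {C : Type u₁} [Category.{v₁} C]
    {D : Type u₂} [Category.{v₂} D] (K : J ⥤ C) (L : C ⥤ D) [PreservesColimit K L] (X : D) :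
    PreservesLimit K.op (L.op ⋙ yoneda.obj X) where
  preserves hc :=
    ⟨isLimitOfPreserves (yoneda.obj X) (isColimitOfPreserves L hc.unop).op⟩

/-- Generalised Mendler-style iteration, ω-cocontinuity version
(Bird–Paterson, Theorem 1 of "Generalised folds for nested datatypes"). -/
theorem generalised_mendler_iteration_cocontinuous
    {C : Type u₁} [Category.{v₁} C] {D : Type u₂} [Category.{v₂} D]
    (F : C ⥤ C) (alg : Endofunctor.Algebra F) (halg : IsInitial alg)
    [HasInitial C] [HasColimitsOfShape ℕ C]
    [PreservesColimitsOfShape ℕ F]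
    (L : C ⥤ D)
    [PreservesColimitsOfShape (Discrete PEmpty.{1}) L]
    [PreservesColimitsOfShape ℕ L]
    (X : D)
    (Ψ : L.op ⋙ yoneda.obj X ⟶ F.op ⋙ L.op ⋙ yoneda.obj X) :
    ∃! h : L.obj alg.a ⟶ X, L.map alg.str ≫ h = Ψ.app (Opposite.op alg.a) h := by
  let _ : Unique ((L.op ⋙ yoneda.obj X).obj (Opposite.op (⊥_ C))) :=
    isInitialEquivUnique (Functor.empty D) _ (initialIsInitial.isInitialObj L _) X
  have := preservesLimit_op_comp_yoneda_obj (initialChain F) L X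
  exact generalised_mendler_iteration_cocontinuous_general halg Ψ
end

section
/- Let C and D be categories, let F : C ⥤ C be an endofunctor with an initial F-algebra (A, a : F(A) ⟶ A), and let L : C ⥤ D be a functor admitting a right adjoint R : D ⥤ C. Let X be an object of D and let Ψ be a natural transformation between the contravariant functors C^op ⥤ Type sending an object c to the hom-set D(L(c), X) and to D(L(F(c)), X) respectively. Then there exists a unique morphism h : L(A) ⟶ X in D such that L(a) ≫ h = Ψ_A(h). -/
open CategoryTheory CategoryTheory.Limits

universe v₁ v₂ u₁ u₂

/-!
The presheaf `P : c ↦ D(L c, X)` is represented by `Y = R X`. By the Yoneda lemma a natural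
transformation `Ψ : P ⟶ F.op ⋙ P` is the same thing as an `F`-algebra structure on `Y`. For every
algebra `(A, a)`, the elements `x` of `P A` with `P(a)(x) = Ψ x` then correspond to the algebra
morphisms from `A` to `Y`, and there is exactly one of these when `A` is initial.
-/

section Representable

open Opposite

universe w

variable {C : Type u₁} [Category.{v₁} C] {F : C ⥤ C} {P : Cᵒᵖ ⥤ Type w} {Y : C}

/-- The `F`-algebra structure on a representing object `Y` of `P` that corresponds to `Ψ` under the
Yoneda lemma: the morphism classified by `Ψ` applied to the universal element of `P`. When `P` is
`c ↦ D(L c, X)` and `L ⊣ R`, it is the transpose `F (R X) ⟶ R X` of `Ψ` applied to the counit. -/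
def mendlerStr (rep : P.RepresentableBy Y) (Ψ : P ⟶ F.op ⋙ P) : F.obj Y ⟶ Y :=
  rep.homEquiv.symm (Ψ.app (op Y) (rep.homEquiv (𝟙 Y)))

lemma app_homEquiv_eq_homEquiv_map_comp_mendlerStr (rep : P.RepresentableBy Y) (Ψ : P ⟶ F.op ⋙ P)
    {c : C} (g : c ⟶ Y) :
    Ψ.app (op c) (rep.homEquiv g) = rep.homEquiv (F.map g ≫ mendlerStr rep Ψ) :=
  calc
    Ψ.app (op c) (rep.homEquiv g) = Ψ.app (op c) (P.map g.op (rep.homEquiv (𝟙 Y))) := by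
      rw [← rep.homEquiv_eq]
    _ = P.map (F.map g).op (Ψ.app (op Y) (rep.homEquiv (𝟙 Y))) :=
      NatTrans.naturality_apply Ψ g.op _
    _ = rep.homEquiv (F.map g ≫ mendlerStr rep Ψ) := by
      rw [rep.homEquiv_comp, mendlerStr, Equiv.apply_symm_apply]

lemma map_homEquiv_eq_app_homEquiv_iff (rep : P.RepresentableBy Y) (Ψ : P ⟶ F.op ⋙ P)
    {c : C} (s : F.obj c ⟶ c) (g : c ⟶ Y) :
    P.map s.op (rep.homEquiv g) = Ψ.app (op c) (rep.homEquiv g) ↔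
      F.map g ≫ mendlerStr rep Ψ = s ≫ g := by
  rw [app_homEquiv_eq_homEquiv_map_comp_mendlerStr, ← rep.homEquiv_comp]
  exact rep.homEquiv.apply_eq_iff_eq.trans eq_comm

/-- Morphisms from an `F`-algebra `A` to the algebra `(Y, mendlerStr rep Ψ)`, identified with the
solutions over `A` of the Mendler-style iteration equation for `Ψ`. -/
def algebraHomEquivSolutions (rep : P.RepresentableBy Y) (Ψ : P ⟶ F.op ⋙ P)
    (A : Endofunctor.Algebra F) :
    (A ⟶ ⟨Y, mendlerStr rep Ψ⟩) ≃
      {x : P.obj (op A.a) // P.map A.str.op x = Ψ.app (op A.a) x} where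
  toFun f := ⟨rep.homEquiv f.f, (map_homEquiv_eq_app_homEquiv_iff rep Ψ A.str f.f).2 f.h⟩
  invFun x :=
    { f := rep.homEquiv.symm x.1
      h := (map_homEquiv_eq_app_homEquiv_iff rep Ψ A.str _).1 <| by
        simpa only [Equiv.apply_symm_apply] using x.2 }
  left_inv f := Endofunctor.Algebra.ext (rep.homEquiv.symm_apply_apply f.f)
  right_inv x := Subtype.ext (rep.homEquiv.apply_symm_apply x.1)

theorem generalised_mendler_iteration_adjoint_general {A : Endofunctor.Algebra F}
    (hA : IsInitial A) (rep : P.RepresentableBy Y) (Ψ : P ⟶ F.op ⋙ P) :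
    ∃! x : P.obj (op A.a), P.map A.str.op x = Ψ.app (op A.a) x := by
  have : Unique (A ⟶ ⟨Y, mendlerStr rep Ψ⟩) := isInitialEquivUnique _ A hA _
  exact (unique_subtype_iff_existsUnique _).1 ⟨(algebraHomEquivSolutions rep Ψ A).symm.unique⟩

end Representable

/-- Generalised Mendler-style iteration, adjoint version
(Bird–Paterson, Theorem 2 of "Generalised folds for nested datatypes"). -/
theorem generalised_mendler_iteration_adjoint
    {C : Type u₁} [Category.{v₁} C] {D : Type u₂} [Category.{v₂} D]
    (F : C ⥤ C) (alg : Endofunctor.Algebra F) (halg : IsInitial alg)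
    (L : C ⥤ D) (R : D ⥤ C) (adj : L ⊣ R)
    (X : D)
    (Ψ : L.op ⋙ yoneda.obj X ⟶ F.op ⋙ L.op ⋙ yoneda.obj X) :
    ∃! h : L.obj alg.a ⟶ X, L.map alg.str ≫ h = Ψ.app (Opposite.op alg.a) h :=
  generalised_mendler_iteration_adjoint_general halg (adj.representableBy X) Ψ
end
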